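/- Let k be a field and n ≥ 1. The Brauer algebra Br(A_n, k[δ,δ⁻¹], δ) over the Laurent polynomial ring k[δ,δ⁻¹], with parameter the variable δ, is a free k[δ,δ⁻¹]-module of rank (2n+1)!! = 1·3·5⋯(2n+1). -/

import Mathlib

open FreeAlgebra

/-- The path graph (Coxeter diagram of type `A_n`) on nodes `1, …, n`
(realized as `Fin n`, node `i` corresponding to index `i-1`): node `i` is
adjacent to node `i+1` for `1 ≤ i ≤ n-1`. -/
def typeA (n : ℕ) : SimpleGraph (Fin n) :=
  SimpleGraph.fromRel (fun i j => (i : ℕ) + 1 = (j : ℕ))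

/-- The Coxeter diagram of type `D_n` (`n ≥ 4`) on nodes `1, …, n` (realized as
`Fin n`, node `i` corresponding to index `i-1`): nodes `1` and `2` are both
adjacent to node `3`, and nodes `i`, `i+1` are adjacent for `3 ≤ i ≤ n-1`. -/
def typeD (n : ℕ) : SimpleGraph (Fin n) :=
  SimpleGraph.fromRel (fun i j =>
    ((i : ℕ) = 0 ∧ (j : ℕ) = 2) ∨ ((i : ℕ) = 1 ∧ (j : ℕ) = 2) ∨
      (2 ≤ (i : ℕ) ∧ (i : ℕ) + 1 = (j : ℕ)))

/-- The Coxeter diagram of type `E_n` (`n = 6, 7, 8`) on nodes `1, …, n`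
(realized as `Fin n`, node `i` corresponding to index `i-1`): a path on nodes
`1, 3, 4, …, n` together with node `2` attached to node `4`. -/
def typeE (n : ℕ) : SimpleGraph (Fin n) :=
  SimpleGraph.fromRel (fun i j =>
    ((i : ℕ) = 0 ∧ (j : ℕ) = 2) ∨ ((i : ℕ) = 1 ∧ (j : ℕ) = 3) ∨
      (2 ≤ (i : ℕ) ∧ (i : ℕ) + 1 = (j : ℕ)))
/-- The defining relations of the Brauer algebra `Br(Q, R, δ)` of simply-laced
type given by the graph `Q`, imposed on the free `R`-algebra on the generators
`R_1, …, R_n` (encoded as `Sum.inl i`) and `E_1, …, E_n` (encoded as `Sum.inr i`). -/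
inductive BrauerRel (n : ℕ) (Q : SimpleGraph (Fin n)) (R : Type*) [CommRing R] (δ : R) :
    FreeAlgebra R (Fin n ⊕ Fin n) → FreeAlgebra R (Fin n ⊕ Fin n) → Prop
  /-- `R_i² = 1` -/
  | rsq (i : Fin n) : BrauerRel n Q R δ (ι R (.inl i) * ι R (.inl i)) 1
  /-- `R_i E_i = E_i` -/
  | re (i : Fin n) : BrauerRel n Q R δ (ι R (.inl i) * ι R (.inr i)) (ι R (.inr i))
  /-- `E_i R_i = E_i` -/
  | er (i : Fin n) : BrauerRel n Q R δ (ι R (.inr i) * ι R (.inl i)) (ι R (.inr i))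
  /-- `E_i² = δ·E_i` -/
  | esq (i : Fin n) : BrauerRel n Q R δ (ι R (.inr i) * ι R (.inr i)) (δ • ι R (.inr i))
  /-- `R_i R_j = R_j R_i` whenever `i ≁ j` -/
  | rr (i j : Fin n) (hne : i ≠ j) (hadj : ¬ Q.Adj i j) :
      BrauerRel n Q R δ (ι R (.inl i) * ι R (.inl j)) (ι R (.inl j) * ι R (.inl i))
  /-- `E_i R_j = R_j E_i` whenever `i ≁ j` -/
  | erc (i j : Fin n) (hne : i ≠ j) (hadj : ¬ Q.Adj i j) :
      BrauerRel n Q R δ (ι R (.inr i) * ι R (.inl j)) (ι R (.inl j) * ι R (.inr i))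
  /-- `E_i E_j = E_j E_i` whenever `i ≁ j` -/
  | ee (i j : Fin n) (hne : i ≠ j) (hadj : ¬ Q.Adj i j) :
      BrauerRel n Q R δ (ι R (.inr i) * ι R (.inr j)) (ι R (.inr j) * ι R (.inr i))
  /-- `R_i R_j R_i = R_j R_i R_j` whenever `i ∼ j` -/
  | braid (i j : Fin n) (hadj : Q.Adj i j) :
      BrauerRel n Q R δ (ι R (.inl i) * ι R (.inl j) * ι R (.inl i))
        (ι R (.inl j) * ι R (.inl i) * ι R (.inl j))
  /-- `R_j R_i E_j = E_i E_j` whenever `i ∼ j` -/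
  | rre (i j : Fin n) (hadj : Q.Adj i j) :
      BrauerRel n Q R δ (ι R (.inl j) * ι R (.inl i) * ι R (.inr j))
        (ι R (.inr i) * ι R (.inr j))
  /-- `R_i E_j R_i = R_j E_i R_j` whenever `i ∼ j` -/
  | rer (i j : Fin n) (hadj : Q.Adj i j) :
      BrauerRel n Q R δ (ι R (.inl i) * ι R (.inr j) * ι R (.inl i))
        (ι R (.inl j) * ι R (.inr i) * ι R (.inl j))

/-- The Brauer algebra `Br(Q, R, δ)` of simply-laced type `Q` over the
commutative ring `R` with parameter `δ ∈ R`. -/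
abbrev BrauerAlgebra (n : ℕ) (Q : SimpleGraph (Fin n)) (R : Type*) [CommRing R] (δ : R) :=
  RingQuot (BrauerRel n Q R δ)


namespace BrA

/-- A system of elements satisfying the type A Brauer relations for indices below `n`. -/
structure Sys (R : Type*) (A : Type*) [CommRing R] [Ring A] [Algebra R A] (n : ℕ) (δ : R)
    (r e : ℕ → A) : Prop where
  rr : ∀ i, i < n → r i * r i = 1
  re : ∀ i, i < n → r i * e i = e i
  er : ∀ i, i < n → e i * r i = e i
  ee : ∀ i, i < n → e i * e i = δ • e i
  crr : ∀ i j, i + 1 < j → j < n → Commute (r i) (r j)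
  cre : ∀ i j, i + 1 < j → j < n → Commute (r i) (e j)
  cer : ∀ i j, i + 1 < j → j < n → Commute (e i) (r j)
  cee : ∀ i j, i + 1 < j → j < n → Commute (e i) (e j)
  braid : ∀ i j, i < n → j < n → (i + 1 = j ∨ j + 1 = i) → r i * r j * r i = r j * r i * r j
  rre : ∀ i j, i < n → j < n → (i + 1 = j ∨ j + 1 = i) → r j * r i * e j = e i * e j
  rer : ∀ i j, i < n → j < n → (i + 1 = j ∨ j + 1 = i) → r i * e j * r i = r j * e i * r j

variable {R A : Type*} [CommRing R] [Ring A] [Algebra R A] {n : ℕ} {δ : R} {r e : ℕ → A}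

namespace Sys

/-- `E_i R_j R_i = R_j R_i E_j`. -/
theorem conj (h : Sys R A n δ r e) {i j : ℕ} (hi : i < n) (hj : j < n)
    (hij : i + 1 = j ∨ j + 1 = i) : e i * r j * r i = r j * r i * e j := by
  have h1 := h.rer i j hi hj hij
  have h2 : r j * (r i * e j * r i) * (r j * (r j * r i)) =
    r j * (r j * e i * r j) * (r j * (r j * r i)) := by rw [h1]
  have hjj := h.rr j hj
  have hii := h.rr i hi
  calc e i * r j * r i = (r j * r j) * e i * (r j * r j) * r j * r i := by rw [hjj]; simp
    _ = r j * (r j * e i * r j) * (r j * (r j * r i)) := by noncomm_ring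
    _ = r j * (r i * e j * r i) * (r j * (r j * r i)) := by rw [h1]
    _ = r j * r i * e j * (r i * ((r j * r j) * r i)) := by noncomm_ring
    _ = _ := by rw [hjj, one_mul, hii, mul_one]

theorem ee_right (h : Sys R A n δ r e) {i j : ℕ} (hi : i < n) (hj : j < n)
    (hij : i + 1 = j ∨ j + 1 = i) : e i * r j * r i = e i * e j := by
  rw [h.conj hi hj hij, h.rre i j hi hj hij]

theorem e_r (h : Sys R A n δ r e) {i j : ℕ} (hi : i < n) (hj : j < n)
    (hij : i + 1 = j ∨ j + 1 = i) : e i * r j = e i * e j * r i := by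
  rw [← h.ee_right hi hj hij, mul_assoc, h.rr i hi, mul_one]

theorem eee (h : Sys R A n δ r e) {i j : ℕ} (hi : i < n) (hj : j < n)
    (hij : i + 1 = j ∨ j + 1 = i) : e j * e i * e j = e j := by
  have hjj := h.rr j hj
  have hii := h.rr i hi
  rw [← h.rre j i hj hi hij.symm, mul_assoc, ← h.rre i j hi hj hij]
  calc r i * r j * (r j * r i * e j) = r i * (r j * r j) * r i * e j := by noncomm_ring
    _ = e j := by rw [hjj, mul_one, hii, one_mul]

theorem ere (h : Sys R A n δ r e) {i j : ℕ} (hi : i < n) (hj : j < n)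
    (hij : i + 1 = j ∨ j + 1 = i) : e j * r i * e j = e j := by
  rw [h.e_r hj hi hij.symm, mul_assoc, h.re j hj, h.eee hi hj hij]

theorem r_ee (h : Sys R A n δ r e) {i j : ℕ} (hi : i < n) (hj : j < n)
    (hij : i + 1 = j ∨ j + 1 = i) : r j * e i * e j = r i * e j := by
  rw [mul_assoc, ← h.rre i j hi hj hij, ← mul_assoc, ← mul_assoc, h.rr j hj, one_mul]

end Sys

/-- Ordered product `x_i x_{i+1} ... x_{m-1}`. -/
def ch (x : ℕ → A) (i m : ℕ) : A := ((List.Ico i m).map x).prod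

theorem ch_self (x : ℕ → A) (i : ℕ) : ch x i i = 1 := by simp [ch]

theorem ch_append (x : ℕ → A) {i j m : ℕ} (h1 : i ≤ j) (h2 : j ≤ m) :
    ch x i m = ch x i j * ch x j m := by
  rw [ch, ch, ch, ← List.prod_append, ← List.map_append, List.Ico.append_consecutive h1 h2]

theorem ch_one (x : ℕ → A) (i : ℕ) : ch x i (i + 1) = x i := by
  simp [ch]

theorem ch_succ (x : ℕ → A) {i m : ℕ} (h : i ≤ m) : ch x i (m + 1) = ch x i m * x m := by
  rw [ch_append x h (Nat.le_succ m), ch_one]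

theorem ch_cons (x : ℕ → A) {i m : ℕ} (h : i < m) : ch x i m = x i * ch x (i + 1) m := by
  rw [ch_append x (Nat.le_succ i) h, ch_one]

theorem ch_commute (x : ℕ → A) {i m : ℕ} {y : A} (h : ∀ k, i ≤ k → k < m → Commute y (x k)) :
    Commute y (ch x i m) := by
  apply Commute.list_prod_right
  intro z hz
  simp only [List.mem_map, List.Ico.mem] at hz
  obtain ⟨k, ⟨h1, h2⟩, rfl⟩ := hz
  exact h k h1 h2

/-- Subalgebra generated by the generators of index below `m`. -/
def B (R : Type*) {A : Type*} [CommRing R] [Ring A] [Algebra R A] (r e : ℕ → A) (m : ℕ) :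
    Subalgebra R A :=
  Algebra.adjoin R {x | ∃ i < m, x = r i ∨ x = e i}

theorem r_mem {i m : ℕ} (h : i < m) : r i ∈ B R r e m :=
  Algebra.subset_adjoin ⟨i, h, Or.inl rfl⟩

theorem e_mem {i m : ℕ} (h : i < m) : e i ∈ B R r e m :=
  Algebra.subset_adjoin ⟨i, h, Or.inr rfl⟩

theorem B_mono {a b : ℕ} (h : a ≤ b) : B R r e a ≤ B R r e b :=
  Algebra.adjoin_mono fun _ ⟨i, hi, hx⟩ => ⟨i, by omega, hx⟩

theorem chr_mem {i m a : ℕ} (h : m ≤ a) : ch r i m ∈ B R r e a := by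
  apply Subalgebra.list_prod_mem
  intro z hz
  simp only [List.mem_map, List.Ico.mem] at hz
  obtain ⟨k, ⟨h1, h2⟩, rfl⟩ := hz
  exact r_mem (by omega)

theorem che_mem {i m a : ℕ} (h : m ≤ a) : ch e i m ∈ B R r e a := by
  apply Subalgebra.list_prod_mem
  intro z hz
  simp only [List.mem_map, List.Ico.mem] at hz
  obtain ⟨k, ⟨h1, h2⟩, rfl⟩ := hz
  exact e_mem (by omega)

theorem comm_B {y x : A} {m : ℕ} (hr : ∀ i < m, Commute y (r i)) (he : ∀ i < m, Commute y (e i))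
    (hx : x ∈ B R r e m) : Commute y x := by
  have : B R r e m ≤ Subalgebra.centralizer R {y} := by
    apply Algebra.adjoin_le
    rintro x ⟨i, hi, rfl | rfl⟩
    · simp only [SetLike.mem_coe, Subalgebra.mem_centralizer_iff, Set.mem_singleton_iff, forall_eq]
      exact hr i hi
    · simp only [SetLike.mem_coe, Subalgebra.mem_centralizer_iff, Set.mem_singleton_iff, forall_eq]
      exact he i hi
  have := this hx
  simp only [Subalgebra.mem_centralizer_iff, Set.mem_singleton_iff, forall_eq] at this
  exact this

namespace Sys

theorem comm_r (h : Sys R A n δ r e) {x : A} {m i : ℕ} (hm : m < i) (hi : i < n)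
    (hx : x ∈ B R r e m) : Commute (r i) x :=
  comm_B (fun k hk => (h.crr k i (by omega) hi).symm) (fun k hk => (h.cer k i (by omega) hi).symm) hx

theorem comm_e (h : Sys R A n δ r e) {x : A} {m i : ℕ} (hm : m < i) (hi : i < n)
    (hx : x ∈ B R r e m) : Commute (e i) x :=
  comm_B (fun k hk => (h.cre k i (by omega) hi).symm) (fun k hk => (h.cee k i (by omega) hi).symm) hx

/-- `r_i c(j,m) = c(j,m) r_{i-1}` for `j < i < m`. -/
theorem r_ch (h : Sys R A n δ r e) {i j m : ℕ} (hji : j ≤ i) (him : i + 1 < m) (hm : m ≤ n) :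
    r (i + 1) * ch r j m = ch r j m * r i := by
  have c1 : Commute (r (i + 1)) (ch r j i) := ch_commute r fun k h1 h2 =>
    (h.crr k (i + 1) (by omega) (by omega)).symm
  have c2 : Commute (r i) (ch r (i + 2) m) := ch_commute r fun k h1 h2 =>
    (h.crr i k (by omega) (by omega))
  rw [ch_append r hji (by omega : i ≤ m), ch_cons r (by omega : i < m),
    ch_cons r (by omega : i + 1 < m)]
  have hb := h.braid (i+1) i (by omega) (by omega) (by omega)
  calc _ = (r (i + 1) * ch r j i) * (r i * (r (i + 1) * ch r (i + 2) m)) := by noncomm_ring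
    _ = ch r j i * (r (i + 1) * r i * r (i + 1)) * ch r (i + 2) m := by rw [c1.eq]; noncomm_ring
    _ = ch r j i * r i * r (i + 1) * (r i * ch r (i + 2) m) := by rw [hb]; noncomm_ring
    _ = _ := by rw [c2.eq]; noncomm_ring

theorem e_ch (h : Sys R A n δ r e) {i j m : ℕ} (hji : j ≤ i) (him : i + 1 < m) (hm : m ≤ n) :
    e (i + 1) * ch r j m = ch r j m * e i := by
  have c1 : Commute (e (i + 1)) (ch r j i) := ch_commute r fun k h1 h2 =>
    (h.cre k (i + 1) (by omega) (by omega)).symm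
  have c2 : Commute (e i) (ch r (i + 2) m) := ch_commute r fun k h1 h2 =>
    (h.cer i k (by omega) (by omega))
  rw [ch_append r hji (by omega : i ≤ m), ch_cons r (by omega : i < m),
    ch_cons r (by omega : i + 1 < m)]
  have hb := h.conj (i := i+1) (j := i) (by omega) (by omega) (by omega)
  calc _ = (e (i + 1) * ch r j i) * (r i * (r (i + 1) * ch r (i + 2) m)) := by noncomm_ring
    _ = ch r j i * (e (i + 1) * r i * r (i + 1)) * ch r (i + 2) m := by rw [c1.eq]; noncomm_ring
    _ = ch r j i * r i * r (i + 1) * (e i * ch r (i + 2) m) := by rw [hb]; noncomm_ring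
    _ = _ := by rw [c2.eq]; noncomm_ring

/-- `e_i r_{i+1} ... r_{m-1} = e_i e_{i+1} ... e_{m-1} b` with `b ∈ B (m-1)`. -/
theorem e_ch_succ (h : Sys R A n δ r e) (m : ℕ) (hm : m < n) (l i : ℕ) (hl : i + l = m) :
    ∃ b ∈ B R r e m, e i * ch r (i + 1) (m + 1) = ch e i (m + 1) * b := by
  induction l generalizing i with
  | zero =>
    obtain rfl : i = m := by omega
    exact ⟨1, one_mem _, by rw [ch_self, ch_one]⟩
  | succ l ih =>
    obtain ⟨b, hb, hbe⟩ := ih (i + 1) (by omega)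
    refine ⟨b * r i, mul_mem hb (r_mem (by omega)), ?_⟩
    have c2 : Commute (r i) (ch r (i + 2) (m + 1)) := ch_commute r fun k h1 h2 =>
      (h.crr i k (by omega) (by omega))
    rw [ch_cons r (by omega : i + 1 < m + 1), ch_cons e (by omega : i < m + 1), ← mul_assoc,
      h.e_r (by omega) (by omega) (Or.inl rfl), mul_assoc, c2.eq, mul_assoc (e i),
      ← mul_assoc (e (i + 1)), hbe]
    noncomm_ring

/-- `(e_i ... e_{M-1}) c(j,M+1)` for `j < i`. -/
theorem che_chr_lt (h : Sys R A n δ r e) {M : ℕ} (hM : M < n) (j l i : ℕ) (hl : i + l = M)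
    (hij : j < i) :
    ch e i M * ch r j (M + 1) = ch r j (M + 1) * ch e (i - 1) (M - 1) := by
  induction l generalizing i with
  | zero =>
    obtain rfl : i = M := by omega
    simp [ch_self]
  | succ l ih =>
    obtain ⟨i, rfl⟩ : ∃ i', i = i' + 1 := ⟨i - 1, by omega⟩
    have := ih (i + 2) (by omega) (by omega)
    rw [ch_cons e (by omega : i + 1 < M), mul_assoc, this, ← mul_assoc,
      h.e_ch (by omega) (by omega) (by omega), mul_assoc,
      show i + 2 - 1 = i + 1 by omega, show i + 1 - 1 = i by omega,
      ← ch_cons e (by omega : i < M - 1)]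

/-- `(e_i ... e_{M-1}) c(j,M+1) = c(j+2,M+1) (e_i ... e_{M-2})` for `i ≤ j < M-1`. -/
theorem che_chr_ge (h : Sys R A n δ r e) {M : ℕ} (hM : M < n) (j i : ℕ) (hij : i ≤ j)
    (hj : j + 1 < M) :
    ch e i M * ch r j (M + 1) = ch r (j + 2) (M + 1) * ch e i (M - 1) := by
  have h3 := h.che_chr_lt hM j (M - (j + 2)) (j + 2) (by omega) (by omega)
  rw [ch_append e (by omega : i ≤ j) (by omega : j ≤ M), ch_cons e (by omega : j < M),
    ch_cons e (by omega : j + 1 < M), mul_assoc, mul_assoc, mul_assoc, h3,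
    ch_cons r (by omega : j < M + 1), ch_cons r (by omega : j + 1 < M + 1)]
  have hc := h.conj (i := j + 1) (j := j) (by omega) (by omega) (by omega)
  have c1 : Commute (e j) (ch r (j + 2) (M + 1)) := ch_commute r fun k h1 h2 =>
      (h.cer j k (by omega) (by omega))
  have c2 : Commute (ch r (j + 2) (M + 1)) (ch e i j) := ch_commute e fun k h1 h2 => Commute.symm <|
    ch_commute r fun k' h1 h2 => (h.cer k k' (by omega) (by omega))
  have key : e j * (e (j + 1) * (r j * r (j + 1))) = e j := by
    rw [← mul_assoc (e (j+1)), hc, ← mul_assoc, ← mul_assoc, h.er j (by omega),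
      h.ere (by omega) (by omega) (by omega)]
  calc _ = ch e i j * (e j * (e (j + 1) * (r j * r (j + 1)))) * ch r (j + 2) (M + 1) *
        ch e (j + 2 - 1) (M - 1) := by noncomm_ring
    _ = ch e i j * (e j * ch r (j + 2) (M + 1)) * ch e (j + 1) (M - 1) := by
      rw [key, show j + 2 - 1 = j + 1 by omega]; noncomm_ring
    _ = (ch e i j * ch r (j + 2) (M + 1)) * (e j * ch e (j + 1) (M - 1)) := by
      rw [c1.eq]; noncomm_ring
    _ = _ := by
      rw [← c2.eq, ← ch_cons e (by omega : j < M - 1), mul_assoc,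
        ← ch_append e (by omega : i ≤ j) (by omega : j ≤ M - 1)]

end Sys


/-- The reversal map as a linear map. -/
def tau (T : A →ₐ[R] Aᵐᵒᵖ) : A →ₗ[R] A :=
  (MulOpposite.opLinearEquiv R).symm.toLinearMap ∘ₗ T.toLinearMap

theorem tau_mul (T : A →ₐ[R] Aᵐᵒᵖ) (x y : A) : tau T (x * y) = tau T y * tau T x := by
  simp [tau]

theorem tau_one (T : A →ₐ[R] Aᵐᵒᵖ) : tau T 1 = 1 := by
  simp [tau]

theorem tau_algebraMap (T : A →ₐ[R] Aᵐᵒᵖ) (x : R) :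
    tau T (algebraMap R A x) = algebraMap R A x := by
  rw [Algebra.algebraMap_eq_smul_one, map_smul, tau_one]

/-- `T` reverses words in the generators. -/
def IsRev (n : ℕ) (r e : ℕ → A) (T : A →ₐ[R] Aᵐᵒᵖ) : Prop :=
  ∀ i < n, tau T (r i) = r i ∧ tau T (e i) = e i

theorem tau_mem {T : A →ₐ[R] Aᵐᵒᵖ} (hT : IsRev n r e T) {m : ℕ} (hm : m ≤ n) {x : A}
    (hx : x ∈ B R r e m) : tau T x ∈ B R r e m ∧ tau T (tau T x) = x := by
  induction hx using Algebra.adjoin_induction with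
  | mem x hx =>
    obtain ⟨i, hi, rfl | rfl⟩ := hx
    · rw [(hT i (by omega)).1, (hT i (by omega)).1]; exact ⟨r_mem hi, rfl⟩
    · rw [(hT i (by omega)).2, (hT i (by omega)).2]; exact ⟨e_mem hi, rfl⟩
  | algebraMap c => rw [tau_algebraMap, tau_algebraMap]; exact ⟨algebraMap_mem _ _, rfl⟩
  | add x y _ _ hx hy =>
    rw [map_add, map_add, hx.2, hy.2]; exact ⟨add_mem hx.1 hy.1, rfl⟩
  | mul x y _ _ hx hy =>
    rw [tau_mul, tau_mul, hx.2, hy.2]; exact ⟨mul_mem hy.1 hx.1, rfl⟩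

/-- The spanning generators of `B (M+1)`. -/
def VS (r e : ℕ → A) (T : A →ₐ[R] Aᵐᵒᵖ) (M : ℕ) : Set A :=
  {x | ∃ j ≤ M + 1, ∃ b ∈ B R r e M, x = ch r j (M + 1) * b} ∪
  {x | ∃ j ≤ M, ∃ b ∈ B R r e M, x = b * e M * tau T (ch r j M)}

theorem v1_mem (T : A →ₐ[R] Aᵐᵒᵖ) {M j : ℕ} (hj : j ≤ M + 1) {b : A} (hb : b ∈ B R r e M) :
    ch r j (M + 1) * b ∈ Submodule.span R (VS r e T M) :=
  Submodule.subset_span (Or.inl ⟨j, hj, b, hb, rfl⟩)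

theorem v2_mem (T : A →ₐ[R] Aᵐᵒᵖ) {M j : ℕ} (hj : j ≤ M) {b : A} (hb : b ∈ B R r e M) :
    b * e M * tau T (ch r j M) ∈ Submodule.span R (VS r e T M) :=
  Submodule.subset_span (Or.inr ⟨j, hj, b, hb, rfl⟩)

theorem b_mem (T : A →ₐ[R] Aᵐᵒᵖ) {M : ℕ} {b : A} (hb : b ∈ B R r e M) :
    b ∈ Submodule.span R (VS r e T M) := by
  have := v1_mem T (le_refl (M + 1)) hb
  rwa [ch_self, one_mul] at this

theorem B_zero {x : A} (hx : x ∈ B R r e 0) : ∃ c : R, x = algebraMap R A c := by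
  have : B R r e 0 = ⊥ := by simp [B]
  rw [this, Algebra.mem_bot] at hx
  obtain ⟨c, hc⟩ := hx
  exact ⟨c, hc.symm⟩

/-- The decomposition property. -/
def D (r e : ℕ → A) (T : A →ₐ[R] Aᵐᵒᵖ) (M : ℕ) : Prop :=
  ∀ x ∈ B R r e (M + 1), x ∈ Submodule.span R (VS r e T M)

namespace Sys

/-- `x b e_M ∈ B_M e_M` for `b ∈ B_M` and `x = r_M, e_M`. -/
theorem mul_b_e (h : Sys R A n δ r e) {T : A →ₐ[R] Aᵐᵒᵖ} (hT : IsRev n r e T) {M : ℕ} (hM : M < n)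
    (hD : ∀ M', M' + 1 = M → D r e T M') {b : A} (hb : b ∈ B R r e M) :
    (∃ b' ∈ B R r e M, r M * b * e M = b' * e M) ∧
    (∃ b' ∈ B R r e M, e M * b * e M = b' * e M) := by
  rcases M with _ | M
  · obtain ⟨c, rfl⟩ := B_zero hb
    constructor
    · refine ⟨_, algebraMap_mem _ c, ?_⟩
      rw [← Algebra.commutes, mul_assoc, h.re 0 hM]
    · refine ⟨_, algebraMap_mem _ (c * δ), ?_⟩
      rw [← Algebra.commutes, mul_assoc, h.ee 0 hM, map_mul, mul_assoc, Algebra.smul_def]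
  · have hd := hD M rfl b hb
    clear hb
    induction hd using Submodule.span_induction with
    | zero => exact ⟨⟨0, zero_mem _, by simp⟩, ⟨0, zero_mem _, by simp⟩⟩
    | add x y _ _ hx hy =>
      obtain ⟨⟨b1, m1, e1⟩, ⟨b2, m2, e2⟩⟩ := hx
      obtain ⟨⟨b3, m3, e3⟩, ⟨b4, m4, e4⟩⟩ := hy
      exact ⟨⟨b1 + b3, add_mem m1 m3, by simp only [mul_add, add_mul, e1, e3]⟩,
        ⟨b2 + b4, add_mem m2 m4, by simp only [mul_add, add_mul, e2, e4]⟩⟩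
    | smul c x _ hx =>
      obtain ⟨⟨b1, m1, e1⟩, ⟨b2, m2, e2⟩⟩ := hx
      exact ⟨⟨c • b1, Subalgebra.smul_mem _ m1 c, by
          simp only [mul_smul_comm, smul_mul_assoc, e1]⟩,
        ⟨c • b2, Subalgebra.smul_mem _ m2 c, by simp only [mul_smul_comm, smul_mul_assoc, e2]⟩⟩
    | mem x hx =>
      rcases hx with ⟨j, hj, b, hb, rfl⟩ | ⟨j, hj, b, hb, rfl⟩
      · have cr := h.comm_r (by omega) hM hb
        have ce := h.comm_e (by omega) hM hb
        have hb' := B_mono (by omega : M ≤ M + 1) hb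
        rcases Nat.lt_or_ge M j with hj' | hj'
        · obtain rfl : j = M + 1 := by omega
          rw [ch_self, one_mul]
          constructor
          · exact ⟨b, hb', by rw [cr.eq, mul_assoc, h.re _ hM]⟩
          · exact ⟨δ • b, Subalgebra.smul_mem _ hb' _, by
              rw [ce.eq, mul_assoc, h.ee _ hM, mul_smul_comm, smul_mul_assoc]⟩
        · rw [ch_succ r hj']
          have hc : ch r j M ∈ B R r e M := chr_mem le_rfl
          have cr' := h.comm_r (by omega) hM hc
          have ce' := h.comm_e (by omega) hM hc
          have hc' := B_mono (by omega : M ≤ M + 1) hc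
          constructor
          · refine ⟨ch r j M * e M * b, mul_mem (mul_mem hc' (e_mem (by omega))) hb', ?_⟩
            calc _ = (r (M + 1) * ch r j M) * r M * (b * e (M + 1)) := by noncomm_ring
              _ = ch r j M * (r (M + 1) * r M * e (M + 1)) * b := by
                rw [cr'.eq, ← ce.eq]; noncomm_ring
              _ = ch r j M * e M * (e (M + 1) * b) := by
                rw [h.rre M (M + 1) (by omega) hM (Or.inl rfl)]; noncomm_ring
              _ = _ := by rw [ce.eq]; noncomm_ring
          · refine ⟨ch r j M * b, mul_mem hc' hb', ?_⟩
            calc _ = (e (M + 1) * ch r j M) * r M * (b * e (M + 1)) := by noncomm_ring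
              _ = ch r j M * (e (M + 1) * r M * e (M + 1)) * b := by
                rw [ce'.eq, ← ce.eq]; noncomm_ring
              _ = ch r j M * (e (M + 1) * b) := by
                rw [h.ere (by omega) hM (Or.inl rfl)]; noncomm_ring
              _ = _ := by rw [ce.eq]; noncomm_ring
      · have cr := h.comm_r (by omega) hM hb
        have ce := h.comm_e (by omega) hM hb
        have hb' := B_mono (by omega : M ≤ M + 1) hb
        have hc : tau T (ch r j M) ∈ B R r e M := (tau_mem hT (by omega) (chr_mem le_rfl)).1
        generalize tau T (ch r j M) = c at hc
        have cr' := h.comm_r (by omega) hM hc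
        have ce' := h.comm_e (by omega) hM hc
        have hc' := B_mono (by omega : M ≤ M + 1) hc
        constructor
        · refine ⟨b * r M * c, mul_mem (mul_mem hb' (r_mem (by omega))) hc', ?_⟩
          calc _ = (r (M + 1) * b) * e M * (c * e (M + 1)) := by noncomm_ring
            _ = b * (r (M + 1) * e M * e (M + 1)) * c := by
              rw [cr.eq, ← ce'.eq]; noncomm_ring
            _ = b * r M * (e (M + 1) * c) := by
              rw [h.r_ee (by omega) hM (Or.inl rfl)]; noncomm_ring
            _ = _ := by rw [ce'.eq]; noncomm_ring
        · refine ⟨b * c, mul_mem hb' hc', ?_⟩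
          calc _ = (e (M + 1) * b) * e M * (c * e (M + 1)) := by noncomm_ring
            _ = b * (e (M + 1) * e M * e (M + 1)) * c := by
              rw [ce.eq, ← ce'.eq]; noncomm_ring
            _ = b * (e (M + 1) * c) := by
              rw [h.eee (by omega) hM (Or.inl rfl)]; noncomm_ring
            _ = _ := by rw [ce'.eq]; noncomm_ring

/-- `e_i ... e_M b ∈ V` for `b ∈ B_M`. -/
theorem che_b (h : Sys R A n δ r e) {T : A →ₐ[R] Aᵐᵒᵖ} (hT : IsRev n r e T) {M : ℕ} (hM : M < n)
    (hD : ∀ M', M' + 1 = M → D r e T M') {b : A} (hb : b ∈ B R r e M) {i : ℕ} (hi : i ≤ M) :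
    ch e i (M + 1) * b ∈ Submodule.span R (VS r e T M) := by
  rcases M with _ | M
  · obtain ⟨c, rfl⟩ := B_zero hb
    obtain rfl : i = 0 := by omega
    have := v2_mem (r := r) (e := e) T (le_refl 0) (algebraMap_mem (B R r e 0) c)
    rw [ch_self, tau_one, mul_one] at this
    rwa [ch_one, ← Algebra.commutes]
  · obtain ⟨ht, htt⟩ := tau_mem hT (by omega) hb
    have hd := hD M rfl _ ht
    rw [← htt]
    clear htt hb
    generalize tau T b = b at hd
    clear ht
    induction hd using Submodule.span_induction with
    | zero => simp
    | add x y _ _ hx hy => rw [map_add, mul_add]; exact add_mem hx hy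
    | smul c x _ hx => rw [map_smul, mul_smul_comm]; exact Submodule.smul_mem _ _ hx
    | mem x hx =>
      rcases hx with ⟨j, hj, b, hb, rfl⟩ | ⟨j, hj, b, hb, rfl⟩
      · obtain ⟨ht, -⟩ := tau_mem hT (by omega) hb
        rw [tau_mul, ch_succ e hi]
        have ce := h.comm_e (by omega) hM ht
        have := v2_mem (r := r) (e := e) T hj
          (mul_mem (che_mem (i := i) (le_refl (M + 1))) (B_mono (by omega : M ≤ M + 1) ht))
        convert this using 1
        calc _ = ch e i (M + 1) * (e (M + 1) * tau T b) * tau T (ch r j (M + 1)) := by noncomm_ring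
          _ = _ := by rw [ce.eq]; noncomm_ring
      · obtain ⟨ht, -⟩ := tau_mem hT (by omega) hb
        have hc : ch r j M ∈ B R r e M := chr_mem le_rfl
        rw [tau_mul, tau_mul, (tau_mem hT (by omega) hc).2, (hT M (by omega)).2]
        have ht' := B_mono (by omega : M ≤ M + 1) ht
        generalize tau T b = c at ht ht'
        have ce := h.comm_e (by omega) hM hc
        have heM : e M ∈ B R r e (M + 1) := e_mem (by omega)
        have e1 : ch e i (M + 1 + 1) * (ch r j M * (e M * c)) =
            ch e i (M + 1) * ch r j (M + 1 + 1) * (e M * c) := by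
          rw [ch_succ e hi, ch_succ r (by omega : j ≤ M + 1), ch_succ r (by omega : j ≤ M)]
          have := h.rre (M + 1) M hM (by omega) (by omega)
          calc _ = ch e i (M + 1) * (e (M + 1) * ch r j M) * e M * c := by noncomm_ring
            _ = ch e i (M + 1) * ch r j M * (e (M + 1) * e M) * c := by rw [ce.eq]; noncomm_ring
            _ = _ := by rw [← this]; noncomm_ring
        rcases Nat.lt_or_ge j i with hji | hji
        · rw [e1, h.che_chr_lt hM j (M + 1 - i) i (by omega) hji, mul_assoc]
          exact v1_mem T (by omega) (mul_mem (che_mem (by omega)) (mul_mem heM ht'))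
        · rcases Nat.lt_or_ge j M with hjM | hjM
          · rw [e1, h.che_chr_ge hM j i hji (by omega), mul_assoc]
            exact v1_mem T (by omega) (mul_mem (che_mem (by omega)) (mul_mem heM ht'))
          · obtain rfl : j = M := by omega
            rw [ch_self, one_mul, ch_succ e hi, ch_succ e hji]
            apply b_mem
            have := h.eee (i := j + 1) (j := j) hM (by omega) (by omega)
            have : ch e i j * e j * e (j + 1) * (e j * c) = ch e i j * (e j * c) := by
              conv_rhs => rw [← this]
              noncomm_ring
            rw [this]
            exact mul_mem (che_mem (by omega)) (mul_mem heM ht')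

theorem left_closed (h : Sys R A n δ r e) {T : A →ₐ[R] Aᵐᵒᵖ} (hT : IsRev n r e T) {M : ℕ}
    (hM : M < n) (hD : ∀ M', M' + 1 = M → D r e T M') {i : ℕ} (hi : i ≤ M) {x : A}
    (hx : x ∈ Submodule.span R (VS r e T M)) :
    r i * x ∈ Submodule.span R (VS r e T M) ∧ e i * x ∈ Submodule.span R (VS r e T M) := by
  induction hx using Submodule.span_induction with
  | zero => simp
  | add x y _ _ hx hy => rw [mul_add, mul_add]; exact ⟨add_mem hx.1 hy.1, add_mem hx.2 hy.2⟩
  | smul c x _ hx =>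
    rw [mul_smul_comm, mul_smul_comm]
    exact ⟨Submodule.smul_mem _ _ hx.1, Submodule.smul_mem _ _ hx.2⟩
  | mem x hx =>
    rcases hx with ⟨j, hj, b, hb, rfl⟩ | ⟨j, hj, b, hb, rfl⟩
    · rcases lt_trichotomy (i + 1) j with hij | hij | hij
      · have cr : Commute (r i) (ch r j (M + 1)) := ch_commute r fun k h1 h2 =>
          (h.crr i k (by omega) (by omega))
        have ce : Commute (e i) (ch r j (M + 1)) := ch_commute r fun k h1 h2 =>
          (h.cer i k (by omega) (by omega))
        rw [← mul_assoc, ← mul_assoc, cr.eq, ce.eq, mul_assoc, mul_assoc]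
        exact ⟨v1_mem T hj (mul_mem (r_mem (by omega)) hb),
          v1_mem T hj (mul_mem (e_mem (by omega)) hb)⟩
      · subst hij
        rw [← mul_assoc, ← mul_assoc, ← ch_cons r (by omega)]
        refine ⟨v1_mem T (by omega) hb, ?_⟩
        obtain ⟨b', hb', he⟩ := h.e_ch_succ M hM (M - i) i (by omega)
        rw [he, mul_assoc]
        exact h.che_b hT hM hD (mul_mem hb' hb) hi
      · rcases Nat.lt_or_ge j i with hji | hji
        · obtain ⟨i, rfl⟩ : ∃ i', i = i' + 1 := ⟨i - 1, by omega⟩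
          rw [← mul_assoc, ← mul_assoc, h.r_ch (by omega) (by omega) (by omega),
            h.e_ch (by omega) (by omega) (by omega), mul_assoc, mul_assoc]
          exact ⟨v1_mem T hj (mul_mem (r_mem (by omega)) hb),
            v1_mem T hj (mul_mem (e_mem (by omega)) hb)⟩
        · obtain rfl : j = i := by omega
          rw [ch_cons r (by omega : j < M + 1), ← mul_assoc, ← mul_assoc, ← mul_assoc, ← mul_assoc,
            h.rr j (by omega), h.er j (by omega), one_mul]
          refine ⟨v1_mem T (by omega) hb, ?_⟩
          obtain ⟨b', hb', he⟩ := h.e_ch_succ M hM (M - j) j (by omega)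
          rw [he, mul_assoc]
          exact h.che_b hT hM hD (mul_mem hb' hb) hi
    · rw [← mul_assoc, ← mul_assoc, ← mul_assoc, ← mul_assoc]
      rcases Nat.lt_or_ge i M with hiM | hiM
      · exact ⟨v2_mem T hj (mul_mem (r_mem hiM) hb), v2_mem T hj (mul_mem (e_mem hiM) hb)⟩
      · obtain rfl : i = M := by omega
        obtain ⟨⟨b1, m1, e1⟩, ⟨b2, m2, e2⟩⟩ := h.mul_b_e hT hM hD hb
        rw [e1, e2]
        exact ⟨v2_mem T hj m1, v2_mem T hj m2⟩

theorem D_all (h : Sys R A n δ r e) {T : A →ₐ[R] Aᵐᵒᵖ} (hT : IsRev n r e T) (M : ℕ)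
    (hM : M < n) : D r e T M := by
  induction M using Nat.strong_induction_on with
  | _ M ih =>
    have hD : ∀ M', M' + 1 = M → D r e T M' := fun M' hM' => ih M' (by omega) (by omega)
    intro x hx
    have key : ∀ v ∈ Submodule.span R (VS r e T M), x * v ∈ Submodule.span R (VS r e T M) := by
      induction hx using Algebra.adjoin_induction with
      | mem x hx =>
        intro v hv
        obtain ⟨i, hi, rfl | rfl⟩ := hx
        · exact (h.left_closed hT hM hD (by omega) hv).1
        · exact (h.left_closed hT hM hD (by omega) hv).2
      | algebraMap c => 
        intro v hv
        rw [← Algebra.smul_def]; exact Submodule.smul_mem _ _ hv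
      | add x y _ _ hx hy => 
        intro v hv
        rw [add_mul]; exact add_mem (hx v hv) (hy v hv)
      | mul x y _ _ hx hy =>
        intro v hv
        rw [mul_assoc]; exact hx _ (hy v hv)
    have := key 1 (b_mem T (one_mem _))
    rwa [mul_one] at this

open scoped Pointwise in
/-- `B m` is spanned by at most `(2m+1)!!` elements. -/
theorem span_card (h : Sys R A n δ r e) {T : A →ₐ[R] Aᵐᵒᵖ} (hT : IsRev n r e T) (m : ℕ)
    (hm : m ≤ n) : ∃ s : Finset A, s.card ≤ Nat.doubleFactorial (2 * m + 1) ∧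
      ∀ x ∈ B R r e m, x ∈ Submodule.span R (s : Set A) := by
  classical
  induction m with
  | zero =>
    refine ⟨{1}, by simp, ?_⟩
    intro x hx
    obtain ⟨c, rfl⟩ := B_zero hx
    rw [Algebra.algebraMap_eq_smul_one]
    exact Submodule.smul_mem _ _ (Submodule.subset_span (by simp))
  | succ m ih =>
    obtain ⟨s, hs, hsp⟩ := ih (by omega)
    let P : Finset A := (Finset.range (m + 2)).image fun j => ch r j (m + 1)
    let Q : Finset A := (Finset.range (m + 1)).image fun j => e m * tau T (ch r j m)
    have hP : P.card ≤ m + 2 := by simpa using Finset.card_image_le (s := Finset.range (m + 2))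
    have hQ : Q.card ≤ m + 1 := by simpa using Finset.card_image_le (s := Finset.range (m + 1))
    refine ⟨P * s ∪ s * Q, ?_, ?_⟩
    · calc _ ≤ (P * s).card + (s * Q).card := Finset.card_union_le _ _
        _ ≤ P.card * s.card + s.card * Q.card :=
          add_le_add Finset.card_mul_le Finset.card_mul_le
        _ ≤ (m + 2) * s.card + s.card * (m + 1) := by gcongr
        _ = (2 * m + 3) * s.card := by ring
        _ ≤ (2 * m + 3) * Nat.doubleFactorial (2 * m + 1) := by gcongr
        _ = _ := by
          rw [show 2 * (m + 1) + 1 = (2 * m + 1) + 2 by ring, Nat.doubleFactorial_add_two]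
    · intro x hx
      have := h.D_all hT m (by omega) x hx
      refine (Submodule.span_le.mpr ?_) this
      rw [Finset.coe_union, Submodule.span_union, Finset.coe_mul, Finset.coe_mul,
        ← Submodule.span_mul_span, ← Submodule.span_mul_span]
      rintro _ (⟨j, hj, b, hb, rfl⟩ | ⟨j, hj, b, hb, rfl⟩)
      · apply Submodule.mem_sup_left
        refine Submodule.mul_mem_mul (Submodule.subset_span ?_) (hsp b hb)
        exact Finset.mem_coe.2 (Finset.mem_image.2 ⟨j, by simpa using by omega, rfl⟩)
      · apply Submodule.mem_sup_right
        rw [mul_assoc]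
        refine Submodule.mul_mem_mul (hsp b hb) (Submodule.subset_span ?_)
        exact Finset.mem_coe.2 (Finset.mem_image.2 ⟨j, by simpa using by omega, rfl⟩)

end Sys

end BrA

namespace BrA

/-- Perfect matchings of `X`, as fixed point free involutions. -/
def Mt (X : Type*) := {σ : Equiv.Perm X // (∀ x, σ (σ x) = x) ∧ ∀ x, σ x ≠ x}

namespace Mt

variable {X : Type*}

instance : CoeFun (Mt X) (fun _ => X → X) := ⟨fun σ => σ.1⟩

theorem inv (σ : Mt X) (x : X) : σ (σ x) = x := σ.2.1 x

theorem ne (σ : Mt X) (x : X) : σ x ≠ x := σ.2.2 x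

theorem ext' {σ τ : Mt X} (h : ∀ x, σ x = τ x) : σ = τ := Subtype.ext (Equiv.ext h)

/-- Relabelling of a matching. -/
def act (p : Equiv.Perm X) (σ : Mt X) : Mt X :=
  ⟨p * σ.1 * p⁻¹, fun x => by simp [σ.2.1], fun x => by
    simp only [Equiv.Perm.mul_apply, ne_eq]
    intro h
    exact σ.2.2 (p⁻¹ x) (by rw [Equiv.Perm.eq_inv_iff_eq]; exact h)⟩

theorem act_apply (p : Equiv.Perm X) (σ : Mt X) (x : X) : act p σ x = p (σ (p⁻¹ x)) := rfl

theorem act_mul (p q : Equiv.Perm X) (σ : Mt X) : act p (act q σ) = act (p * q) σ :=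
  ext' fun x => by simp [act_apply]

theorem act_one (σ : Mt X) : act 1 σ = σ := ext' fun x => by simp [act_apply]

variable [DecidableEq X]

/-- Joining `a` and `b` -/
def jn (a b : X) (σ : Mt X) : Mt X := act (Equiv.swap b (σ a)) σ

theorem jn_apply (a b : X) (hab : a ≠ b) (σ : Mt X) (x : X) : jn a b σ x =
    if x = a then b else if x = b then a else if x = σ a then σ b else if x = σ b then σ a
      else σ x := by
  have h1 := σ.inv
  have h2 := σ.ne
  rw [jn, act_apply, Equiv.swap_inv, Equiv.swap_apply_def, Equiv.swap_apply_def]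
  grind

theorem act_jn (p : Equiv.Perm X) (a b : X) (σ : Mt X) :
    act p (jn a b σ) = jn (p a) (p b) (act p σ) := by
  rw [jn, jn, act_mul, act_mul, act_apply]
  congr 1
  rw [show p⁻¹ (p a) = a from p.symm_apply_apply a, Equiv.swap_apply_apply]
  group

theorem jn_symm (a b : X) (hab : a ≠ b) (σ : Mt X) : jn a b σ = jn b a σ := by
  apply ext'
  intro x
  have h1 := σ.inv
  have h2 := σ.ne
  rw [jn_apply a b hab, jn_apply b a hab.symm]
  grind

theorem act_swap_jn (a b : X) (hab : a ≠ b) (σ : Mt X) :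
    act (Equiv.swap a b) (jn a b σ) = jn a b σ := by
  apply ext'
  intro x
  have h1 := σ.inv
  have h2 := σ.ne
  rw [act_apply, Equiv.swap_inv, jn_apply a b hab, jn_apply a b hab]
  simp only [Equiv.swap_apply_def]
  grind

theorem jn_jn (a b : X) (σ : Mt X) (h : σ a = b) : jn a b σ = σ := by
  rw [jn, h, Equiv.swap_self]; exact act_one σ

theorem jn_left (a b : X) (hab : a ≠ b) (σ : Mt X) : jn a b σ a = b := by
  simp [jn_apply a b hab]

theorem jn_comm (a b c d : X) (hab : a ≠ b) (hcd : c ≠ d) (hac : a ≠ c) (had : a ≠ d)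
    (hbc : b ≠ c) (hbd : b ≠ d) (σ : Mt X) : jn a b (jn c d σ) = jn c d (jn a b σ) := by
  apply ext'
  intro x
  have h1 := σ.inv
  have h2 := σ.ne
  simp only [jn_apply a b hab, jn_apply c d hcd]
  grind (splits := 40)

/-- three-point relation -/
theorem jn3 (a b c : X) (hab : a ≠ b) (hac : a ≠ c) (hbc : b ≠ c) (σ : Mt X) (h : σ b = c) :
    act (Equiv.swap b c) (act (Equiv.swap a b) σ) = jn a b σ := by
  apply ext'
  intro x
  have h1 := σ.inv
  have h2 := σ.ne
  simp only [jn_apply a b hab, act_apply, Equiv.swap_inv, Equiv.swap_apply_def]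
  grind

end Mt

section ops

variable {X : Type*} [DecidableEq X] {R : Type*} [CommRing R] (δ : R)

/-- scalar attached to a closed loop -/
def wt (a b : X) (σ : Mt X) : R := if σ a = b then δ else 1

theorem wt_comm (a b c d : X) (hab : a ≠ b) (hcd : c ≠ d) (hac : a ≠ c) (had : a ≠ d)
    (hbc : b ≠ c) (hbd : b ≠ d) (σ : Mt X) :
    wt δ c d σ * wt δ a b (Mt.jn c d σ) = wt δ a b σ * wt δ c d (Mt.jn a b σ) := by
  have h1 := σ.inv
  have h2 := σ.ne
  simp only [wt, Mt.jn_apply a b hab, Mt.jn_apply c d hcd]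
  grind

/-- relabelling operator -/
noncomputable def opS (R : Type*) [CommRing R] (p : Equiv.Perm X) : Module.End R (Mt X →₀ R) :=
  Finsupp.linearCombination R fun σ => Finsupp.single (Mt.act p σ) 1

/-- joining operator -/
noncomputable def opE (a b : X) : Module.End R (Mt X →₀ R) :=
  Finsupp.linearCombination R fun σ => Finsupp.single (Mt.jn a b σ) (wt δ a b σ)

theorem opS_single (p : Equiv.Perm X) (σ : Mt X) (c : R) :
    opS R p (Finsupp.single σ c) = Finsupp.single (Mt.act p σ) c := by
  simp [opS]

theorem opE_single (a b : X) (σ : Mt X) (c : R) :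
    opE δ a b (Finsupp.single σ c) = Finsupp.single (Mt.jn a b σ) (c * wt δ a b σ) := by
  simp [opE]

theorem end_ext {f g : Module.End R (Mt X →₀ R)}
    (h : ∀ σ, f (Finsupp.single σ 1) = g (Finsupp.single σ 1)) : f = g := by
  apply Finsupp.lhom_ext'
  intro σ
  apply LinearMap.ext_ring
  exact h σ

theorem opS_mul (p q : Equiv.Perm X) : opS R p * opS R q = opS R (p * q) :=
  end_ext fun σ => by simp [opS_single, Mt.act_mul]

theorem opS_one : opS R (1 : Equiv.Perm X) = 1 :=
  end_ext fun σ => by simp [opS_single, Mt.act_one]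

theorem opS_opE (p : Equiv.Perm X) (a b : X) :
    opS R p * opE δ a b = opE δ (p a) (p b) * opS R p :=
  end_ext fun σ => by
    have : wt δ (p a) (p b) (Mt.act p σ) = wt δ a b σ := by
      simp [wt, Mt.act_apply]
    simp [opS_single, opE_single, Mt.act_jn, this]

theorem opE_symm (a b : X) (hab : a ≠ b) : opE δ a b = opE δ b a :=
  end_ext fun σ => by
    have : wt δ a b σ = wt δ b a σ := by
      have h1 := σ.inv
      simp only [wt]
      grind
    rw [opE_single, opE_single, this, Mt.jn_symm a b hab]

theorem opSE (a b : X) (hab : a ≠ b) : opS R (Equiv.swap a b) * opE δ a b = opE δ a b :=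
  end_ext fun σ => by
    simp [opS_single, opE_single, Mt.act_swap_jn a b hab]

theorem opES (a b : X) (hab : a ≠ b) : opE δ a b * opS R (Equiv.swap a b) = opE δ a b := by
  have := opS_opE δ (Equiv.swap a b) a b
  rw [opSE δ a b hab, Equiv.swap_apply_left, Equiv.swap_apply_right, ← opE_symm δ a b hab] at this
  exact this.symm

theorem opEE (a b : X) (hab : a ≠ b) : opE δ a b * opE δ a b = δ • opE δ a b :=
  end_ext fun σ => by
    have h := Mt.jn_left a b hab σ
    simp only [Module.End.mul_apply, LinearMap.smul_apply, opE_single, Mt.jn_jn a b _ h, wt, h,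
      Finsupp.smul_single, if_true, smul_eq_mul]
    congr 1
    ring

theorem opEE_comm (a b c d : X) (hab : a ≠ b) (hcd : c ≠ d) (hac : a ≠ c) (had : a ≠ d)
    (hbc : b ≠ c) (hbd : b ≠ d) : opE δ a b * opE δ c d = opE δ c d * opE δ a b :=
  end_ext fun σ => by
    simp only [Module.End.mul_apply, opE_single, one_mul, Mt.jn_comm a b c d hab hcd hac had hbc hbd,
      wt_comm δ a b c d hab hcd hac had hbc hbd]

theorem opSSE (a b c : X) (hab : a ≠ b) (hac : a ≠ c) (hbc : b ≠ c) :
    opS R (Equiv.swap b c) * opS R (Equiv.swap a b) * opE δ b c = opE δ a b * opE δ b c :=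
  end_ext fun σ => by
    have h := Mt.jn_left b c hbc σ
    have hw : wt δ a b (Mt.jn b c σ) = 1 := by
      rw [wt, if_neg]
      intro h'
      have := (Mt.jn b c σ).inv a
      rw [h', h] at this
      exact hac this.symm
    simp only [Module.End.mul_apply, opE_single, opS_single, one_mul, hw, mul_one,
      Mt.jn3 a b c hab hac hbc _ h]

end ops

end BrA

namespace BrA

section surj

variable {n : ℕ} {R : Type*} [CommRing R] (δ : R)

/-- the points of a diagram -/
abbrev Pt (n : ℕ) := Fin (n + 1) ⊕ Fin (n + 1)

/-- identity diagram -/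
def idm (n : ℕ) : Mt (Pt n) :=
  ⟨Equiv.sumComm _ _, by rintro (x | x) <;> rfl, by rintro (x | x) <;> simp⟩

/-- permutation of the upper points -/
def upP (p : Equiv.Perm (Fin (n + 1))) : Equiv.Perm (Pt n) :=
  Equiv.Perm.sumCongrHom _ _ (p, 1)

theorem upP_mul (p q : Equiv.Perm (Fin (n + 1))) : upP (p * q) = upP p * upP q := by
  rw [upP, upP, upP, ← map_mul]; simp

theorem upP_one : upP (1 : Equiv.Perm (Fin (n + 1))) = 1 := by
  exact map_one (Equiv.Perm.sumCongrHom _ _)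

theorem upP_inl (p : Equiv.Perm (Fin (n + 1))) (x) : upP p (Sum.inl x) = Sum.inl (p x) := rfl
theorem upP_inr (p : Equiv.Perm (Fin (n + 1))) (x) : upP p (Sum.inr x) = Sum.inr x := rfl

theorem upP_swap (a b : Fin (n + 1)) :
    upP (Equiv.swap a b) = Equiv.swap (Sum.inl a) (Sum.inl b) := by
  ext x
  rcases x with x | x
  · rw [upP_inl, Equiv.swap_apply_def, Equiv.swap_apply_def]; simp only [Sum.inl.injEq]; grind
  · rw [upP_inr, Equiv.swap_apply_of_ne_of_ne] <;> simp

/-- closure under the generators -/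
structure Clo (U : Submodule R (Mt (Pt n) →₀ R)) : Prop where
  s : ∀ (i : Fin n), ∀ u ∈ U, opS R (Equiv.swap (Sum.inl i.castSucc) (Sum.inl i.succ)) u ∈ U
  e : ∀ (i : Fin n), ∀ u ∈ U, opE δ (Sum.inl i.castSucc) (Sum.inl i.succ) u ∈ U

variable {δ} {U : Submodule R (Mt (Pt n) →₀ R)}

theorem Clo.perm (h : Clo δ U) (p : Equiv.Perm (Fin (n + 1))) : ∀ u ∈ U, opS R (upP p) u ∈ U := by
  have hp : p ∈ Submonoid.closure (Set.range fun i : Fin n ↦ Equiv.swap i.castSucc i.succ) := by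
    rw [Equiv.Perm.mclosure_swap_castSucc_succ]; trivial
  induction hp using Submonoid.closure_induction with
  | mem x hx =>
    obtain ⟨i, rfl⟩ := hx
    rw [upP_swap]
    exact h.s i
  | one => intro u hu; rw [upP_one, opS_one]; exact hu
  | mul x y _ _ hx hy =>
    intro u hu
    rw [upP_mul, ← opS_mul]
    exact hx _ (hy _ hu)

theorem Clo.join (h : Clo δ U) (a b : Fin (n + 1)) (hab : a ≠ b) :
    ∀ u ∈ U, opE δ (Sum.inl a) (Sum.inl b) u ∈ U := by
  intro u hu
  rcases n with _ | n
  · exact absurd (Fin.ext (by omega)) hab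
  let i : Fin (n + 1) := 0
  have hi : i.castSucc ≠ i.succ := by simp [i]
  let p1 := Equiv.swap i.castSucc a
  let q := Equiv.swap (p1 i.succ) b
  let p := q * p1
  have h1 : p1 i.castSucc = a := Equiv.swap_apply_left _ _
  have pa : p i.castSucc = a := by
    change q (p1 i.castSucc) = a
    rw [h1]
    apply Equiv.swap_apply_of_ne_of_ne _ hab
    rw [← h1]
    exact fun hh => hi (p1.injective hh)
  have pb : p i.succ = b := Equiv.swap_apply_left _ _
  have key := opS_opE δ (upP p) (Sum.inl i.castSucc) (Sum.inl i.succ)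
  rw [upP_inl, upP_inl, pa, pb] at key
  have h2 : opE δ (Sum.inl a) (Sum.inl b) =
      opS R (upP p) * opE δ (Sum.inl i.castSucc) (Sum.inl i.succ) * opS R (upP p⁻¹) := by
    rw [key, mul_assoc, opS_mul, ← upP_mul, mul_inv_cancel, upP_one, opS_one, mul_one]
  rw [h2]
  exact h.perm _ _ (h.e i _ (h.perm _ _ hu))

theorem Clo.all (h : Clo δ U) (h0 : Finsupp.single (idm n) 1 ∈ U) (N : ℕ) (σ : Mt (Pt n))
    (hN : (Finset.univ.filter fun x : Fin (n + 1) => (σ (Sum.inr x)).isRight).card = N) :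
    Finsupp.single σ 1 ∈ U := by
  induction N using Nat.strong_induction_on generalizing σ with
  | _ N ih =>
  by_cases hb : ∃ x y, σ (Sum.inr x) = Sum.inr y
  · obtain ⟨x, y, hxy⟩ := hb
    have hxy0 : x ≠ y := by rintro rfl; exact σ.ne _ hxy
    -- there is an upper cap
    have ht : ∃ a b, σ (Sum.inl a) = Sum.inl b := by
      by_contra hno
      push Not at hno
      have : ∀ a, ∃ z, σ (Sum.inl a) = Sum.inr z := by
        intro a
        rcases hz : σ (Sum.inl a) with z | z
        · exact absurd hz (hno a z)
        · exact ⟨z, rfl⟩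
      choose f hf using this
      have hinj : Function.Injective f := by
        intro a a' haa
        have : σ (Sum.inl a) = σ (Sum.inl a') := by rw [hf, hf, haa]
        exact Sum.inl_injective (σ.1.injective this)
      obtain ⟨a, ha⟩ := (Finite.injective_iff_surjective.1 hinj) x
      have h1 := σ.inv (Sum.inl a)
      rw [hf, ha, hxy] at h1
      exact Sum.inr_ne_inl h1
    obtain ⟨a, b, hab⟩ := ht
    have hab0 : a ≠ b := by rintro rfl; exact σ.ne _ hab
    have hyx : σ (Sum.inr y) = Sum.inr x := by rw [← hxy, σ.inv]
    have hba : σ (Sum.inl b) = Sum.inl a := by rw [← hab, σ.inv]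
    let τ := Mt.jn (Sum.inl a) (Sum.inr x) σ
    have hτ : ∀ z, τ z = _ := Mt.jn_apply (Sum.inl a) (Sum.inr x) Sum.inl_ne_inr σ
    rw [hab, hxy] at hτ
    have hj : Mt.jn (Sum.inl a) (Sum.inl b) τ = σ := by
      apply Mt.ext'
      intro z
      have h1 := σ.inv
      rw [Mt.jn_apply _ _ (fun hh => hab0 (Sum.inl_injective hh))]
      simp only [hτ]
      grind
    have hw : wt δ (Sum.inl a) (Sum.inl b) τ = 1 := by
      rw [wt, if_neg]
      rw [hτ]
      simp
    have hτU : Finsupp.single τ 1 ∈ U := by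
      refine ih _ ?_ τ rfl
      rw [← hN]
      apply Finset.card_lt_card
      rw [Finset.ssubset_iff_of_subset]
      · refine ⟨x, by simp [hxy], ?_⟩
        simp [hτ]
      · intro z
        simp only [Finset.mem_filter, Finset.mem_univ, true_and, hτ]
        split_ifs <;> simp_all
    have := h.join a b hab0 _ hτU
    rwa [opE_single, hj, hw, mul_one] at this
  · push Not at hb
    have : ∀ a, ∃ z, σ (Sum.inr a) = Sum.inl z := by
      intro a
      rcases hz : σ (Sum.inr a) with z | z
      · exact ⟨z, rfl⟩
      · exact absurd hz (hb a z)
    choose f hf using this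
    have hinj : Function.Injective f := by
      intro a a' haa
      have : σ (Sum.inr a) = σ (Sum.inr a') := by rw [hf, hf, haa]
      exact Sum.inr_injective (σ.1.injective this)
    let p : Equiv.Perm (Fin (n + 1)) :=
      Equiv.ofBijective f (Finite.injective_iff_bijective.1 hinj)
    have hp : Mt.act (upP p) (idm n) = σ := by
      apply Mt.ext'
      have hsymm : ∀ z, (upP p)⁻¹ z = upP p⁻¹ z := by
        intro z
        rw [Equiv.Perm.inv_eq_iff_eq, ← Equiv.Perm.mul_apply, ← upP_mul, mul_inv_cancel, upP_one]
        rfl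
      rintro (z | z)
      · rw [Mt.act_apply, hsymm]
        change Sum.inr (p⁻¹ z) = _
        have := hf (p⁻¹ z)
        have h2 : f (p⁻¹ z) = z := p.apply_symm_apply z
        rw [h2] at this
        rw [← this, σ.inv]
      · rw [Mt.act_apply, hsymm, hf]
        rfl
    have := h.perm p _ h0
    rwa [opS_single, hp] at this

theorem Clo.top (h : Clo δ U) (h0 : Finsupp.single (idm n) 1 ∈ U) : U = ⊤ := by
  rw [eq_top_iff]
  intro m _
  rw [← Finsupp.sum_single m]
  refine Submodule.sum_mem _ fun σ _ => ?_
  have := U.smul_mem (m σ) (h.all h0 _ σ rfl)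
  rwa [Finsupp.smul_single, smul_eq_mul, mul_one] at this

end surj

end BrA

namespace BrA

theorem card_mt (n : ℕ) : Nat.doubleFactorial (2 * n + 1) ≤ Nat.card (Mt (Pt n)) := by
  classical
  have hc := Equiv.Perm.card_of_cycleType_mul_eq (α := Pt n) (Multiset.replicate (n + 1) 2)
  have hcard : Fintype.card (Pt n) = 2 * (n + 1) := by simp; ring
  rw [hcard, if_pos (by
    constructor
    · simp; omega
    · intro a ha; rw [Multiset.eq_of_mem_replicate ha])] at hc
  have h1 : 2 * (n + 1) - (Multiset.replicate (n + 1) 2).sum = 0 := by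
    simp; omega
  rw [h1, Multiset.toFinset_replicate] at hc
  simp only [Nat.factorial_zero, one_mul, Multiset.prod_replicate, Nat.add_eq_zero_iff, one_ne_zero,
    and_false, if_false, Finset.prod_singleton, Multiset.count_replicate_self] at hc
  rw [← Nat.doubleFactorial_two_mul, show 2 * (n + 1) = (2 * n + 1) + 1 by ring,
    Nat.factorial_eq_mul_doubleFactorial, mul_comm] at hc
  have hc' := Nat.eq_of_mul_eq_mul_left (Nat.doubleFactorial_pos _) hc
  rw [← hc', ← Fintype.card_coe, ← Nat.card_eq_fintype_card]
  have key : ∀ g : Equiv.Perm (Pt n), g.cycleType = Multiset.replicate (n + 1) 2 →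
      (∀ x, g (g x) = x) ∧ ∀ x, g x ≠ x := by
    intro g hg
    constructor
    · have h2 : g ^ 2 = 1 := by
        rw [← orderOf_dvd_iff_pow_eq_one, ← Equiv.Perm.lcm_cycleType, hg]
        apply Multiset.lcm_dvd.2
        intro b hb; rw [Multiset.eq_of_mem_replicate hb]
      intro x
      have := congrArg (fun p : Equiv.Perm (Pt n) => p x) h2
      simpa [pow_two] using this
    · have hs := Equiv.Perm.sum_cycleType g
      rw [hg] at hs
      have hs' : g.support = Finset.univ := by
        rw [← Finset.card_eq_iff_eq_univ, ← hs, hcard]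
        simp; ring
      intro x
      rw [← Equiv.Perm.mem_support, hs']
      exact Finset.mem_univ x
  have : Finite (Mt (Pt n)) := by unfold Mt; infer_instance
  refine Nat.card_le_card_of_injective
    (fun g => (⟨g.1, key g.1 (Finset.mem_filter.1 g.2).2⟩ : Mt (Pt n))) ?_
  intro g g' h
  exact Subtype.ext (congrArg (fun m : Mt (Pt n) => m.1) h)

/-- final linear algebra step -/
theorem free_of_surj {R M : Type*} [CommRing R] [Nontrivial R] [AddCommGroup M] [Module R M]
    (I : Type*) [Finite I] (s : Finset M) (hs : Submodule.span R (s : Set M) = ⊤)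
    (hc : s.card ≤ Nat.card I) (f : M →ₗ[R] (I →₀ R)) (hf : Function.Surjective f) :
    Module.Free R M ∧ Module.rank R M = (Nat.card I : Cardinal) := by
  classical
  have := Fintype.ofFinite I
  rw [Nat.card_eq_fintype_card] at hc ⊢
  have : Nonempty (Fin s.card ↪ I) := by
    rw [Function.Embedding.nonempty_iff_card_le]; simpa using hc
  obtain ⟨em⟩ := this
  let em' : s ↪ I := s.equivFin.toEmbedding.trans em
  -- surjection from I →₀ R to M
  let v : I → M := fun i => if h : ∃ x : s, em' x = i then h.choose.1 else 0
  have hv : ∀ x : s, v (em' x) = x := by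
    intro x
    have h : ∃ y : s, em' y = em' x := ⟨x, rfl⟩
    simp only [v, dif_pos h]
    exact congrArg Subtype.val (em'.injective h.choose_spec)
  let g : (I →₀ R) →ₗ[R] M := Finsupp.linearCombination R v
  have hg : Function.Surjective g := by
    rw [← LinearMap.range_eq_top, Finsupp.range_linearCombination, eq_top_iff, ← hs,
      Submodule.span_le]
    intro x hx
    exact Submodule.subset_span ⟨em' ⟨x, hx⟩, hv ⟨x, hx⟩⟩
  have hinj : Function.Injective (f ∘ₗ g) :=
    OrzechProperty.injective_of_surjective_endomorphism _ (hf.comp hg)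
  have hgi : Function.Injective g := by
    intro a b hab
    exact hinj (by simp [hab])
  let E := LinearEquiv.ofBijective g ⟨hgi, hg⟩
  have hfree : Module.Free R M := Module.Free.of_equiv E
  refine ⟨hfree, ?_⟩
  have := (Module.Basis.ofRepr E.symm).mk_eq_rank
  simpa using this.symm

section concrete

variable (n : ℕ) (R : Type*) [CommRing R] (δ : R)

/-- generator of the Brauer algebra -/
noncomputable def gen (x : Fin n ⊕ Fin n) : BrauerAlgebra n (typeA n) R δ :=
  RingQuot.mkAlgHom R (BrauerRel n (typeA n) R δ) (FreeAlgebra.ι R x)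

theorem adjA (i j : Fin n) : (typeA n).Adj i j ↔ (i : ℕ) + 1 = j ∨ (j : ℕ) + 1 = i := by
  simp only [typeA, SimpleGraph.fromRel_adj, ne_eq, and_iff_right_iff_imp]
  rintro h rfl
  omega

/-- The relations, for functions into an arbitrary algebra. -/
structure GR {A : Type*} [Ring A] [Algebra R A] (r e : Fin n → A) : Prop where
  rsq : ∀ i, r i * r i = 1
  re : ∀ i, r i * e i = e i
  er : ∀ i, e i * r i = e i
  esq : ∀ i, e i * e i = δ • e i
  rr : ∀ i j, i ≠ j → ¬ (typeA n).Adj i j → r i * r j = r j * r i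
  erc : ∀ i j, i ≠ j → ¬ (typeA n).Adj i j → e i * r j = r j * e i
  ee : ∀ i j, i ≠ j → ¬ (typeA n).Adj i j → e i * e j = e j * e i
  braid : ∀ i j, (typeA n).Adj i j → r i * r j * r i = r j * r i * r j
  rre : ∀ i j, (typeA n).Adj i j → r j * r i * e j = e i * e j
  rer : ∀ i j, (typeA n).Adj i j → r i * e j * r i = r j * e i * r j

theorem gen_rel : GR n R δ (fun i => gen n R δ (.inl i)) (fun i => gen n R δ (.inr i)) := by
  constructor
  · intro i; simpa [gen] using RingQuot.mkAlgHom_rel R (BrauerRel.rsq (Q := typeA n) (δ := δ) i)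
  · intro i; simpa [gen] using RingQuot.mkAlgHom_rel R (BrauerRel.re (Q := typeA n) (δ := δ) i)
  · intro i; simpa [gen] using RingQuot.mkAlgHom_rel R (BrauerRel.er (Q := typeA n) (δ := δ) i)
  · intro i; simpa [gen] using RingQuot.mkAlgHom_rel R (BrauerRel.esq (Q := typeA n) (δ := δ) i)
  · intro i j h1 h2
    simpa [gen] using RingQuot.mkAlgHom_rel R (BrauerRel.rr (Q := typeA n) (δ := δ) i j h1 h2)
  · intro i j h1 h2
    simpa [gen] using RingQuot.mkAlgHom_rel R (BrauerRel.erc (Q := typeA n) (δ := δ) i j h1 h2)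
  · intro i j h1 h2
    simpa [gen] using RingQuot.mkAlgHom_rel R (BrauerRel.ee (Q := typeA n) (δ := δ) i j h1 h2)
  · intro i j h1
    simpa [gen] using RingQuot.mkAlgHom_rel R (BrauerRel.braid (Q := typeA n) (δ := δ) i j h1)
  · intro i j h1
    simpa [gen] using RingQuot.mkAlgHom_rel R (BrauerRel.rre (Q := typeA n) (δ := δ) i j h1)
  · intro i j h1
    simpa [gen] using RingQuot.mkAlgHom_rel R (BrauerRel.rer (Q := typeA n) (δ := δ) i j h1)

variable {n R δ}

theorem GR.lift {A : Type*} [Ring A] [Algebra R A] {r e : Fin n → A} (h : GR n R δ r e) :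
    ∃ F : BrauerAlgebra n (typeA n) R δ →ₐ[R] A,
      (∀ i, F (gen n R δ (.inl i)) = r i) ∧ ∀ i, F (gen n R δ (.inr i)) = e i := by
  let f : FreeAlgebra R (Fin n ⊕ Fin n) →ₐ[R] A := FreeAlgebra.lift R (Sum.elim r e)
  have hf : ∀ ⦃x y⦄, BrauerRel n (typeA n) R δ x y → f x = f y := by
    intro x y hxy
    cases hxy with
    | rsq i => simpa [f] using h.rsq i
    | re i => simpa [f] using h.re i
    | er i => simpa [f] using h.er i
    | esq i => simpa [f] using h.esq i
    | rr i j h1 h2 => simpa [f] using h.rr i j h1 h2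
    | erc i j h1 h2 => simpa [f] using h.erc i j h1 h2
    | ee i j h1 h2 => simpa [f] using h.ee i j h1 h2
    | braid i j h1 => simpa [f] using h.braid i j h1
    | rre i j h1 => simpa [f] using h.rre i j h1
    | rer i j h1 => simpa [f] using h.rer i j h1
  refine ⟨RingQuot.liftAlgHom R ⟨f, hf⟩, ?_, ?_⟩
  · intro i
    rw [gen, RingQuot.liftAlgHom_mkAlgHom_apply]; simp [f]
  · intro i
    rw [gen, RingQuot.liftAlgHom_mkAlgHom_apply]; simp [f]

/-- extension by one -/
def ex {A : Type*} [Ring A] (r : Fin n → A) (i : ℕ) : A := if h : i < n then r ⟨i, h⟩ else 1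

theorem ex_lt {A : Type*} [Ring A] (r : Fin n → A) {i : ℕ} (h : i < n) : ex r i = r ⟨i, h⟩ :=
  dif_pos h

theorem GR.sys {A : Type*} [Ring A] [Algebra R A] {r e : Fin n → A} (h : GR n R δ r e) :
    Sys R A n δ (ex r) (ex e) where
  rr i hi := by rw [ex_lt r hi]; exact h.rsq _
  re i hi := by rw [ex_lt r hi, ex_lt e hi]; exact h.re _
  er i hi := by rw [ex_lt r hi, ex_lt e hi]; exact h.er _
  ee i hi := by rw [ex_lt e hi]; exact h.esq _
  crr i j hij hj := by
    rw [ex_lt r (by omega : i < n), ex_lt r hj]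
    exact h.rr _ _ (by simp; omega) (by rw [adjA]; simp; omega)
  cre i j hij hj := by
    rw [ex_lt r (by omega : i < n), ex_lt e hj]
    exact (h.erc _ _ (by simp; omega) (by rw [adjA]; simp; omega)).symm
  cer i j hij hj := by
    rw [ex_lt e (by omega : i < n), ex_lt r hj]
    exact h.erc _ _ (by simp; omega) (by rw [adjA]; simp; omega)
  cee i j hij hj := by
    rw [ex_lt e (by omega : i < n), ex_lt e hj]
    exact h.ee _ _ (by simp; omega) (by rw [adjA]; simp; omega)
  braid i j hi hj hij := by
    rw [ex_lt r hi, ex_lt r hj]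
    exact h.braid _ _ (by rw [adjA]; exact hij)
  rre i j hi hj hij := by
    rw [ex_lt r hi, ex_lt r hj, ex_lt e hi, ex_lt e hj]
    exact h.rre _ _ (by rw [adjA]; exact hij)
  rer i j hi hj hij := by
    rw [ex_lt r hi, ex_lt r hj, ex_lt e hi, ex_lt e hj]
    exact h.rer _ _ (by rw [adjA]; exact hij)

open MulOpposite in
/-- The opposite relations. -/
theorem GR.op {A : Type*} [Ring A] [Algebra R A] {r e : Fin n → A} (h : GR n R δ r e) :
    GR n R δ (fun i => op (r i)) (fun i => op (e i)) where
  rsq i := by rw [← op_mul, h.rsq, op_one]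
  re i := by rw [← op_mul, h.er]
  er i := by rw [← op_mul, h.re]
  esq i := by rw [← op_mul, h.esq, op_smul]
  rr i j h1 h2 := by rw [← op_mul, ← op_mul, h.rr i j h1 h2]
  erc i j h1 h2 := by rw [← op_mul, ← op_mul, h.erc i j h1 h2]
  ee i j h1 h2 := by rw [← op_mul, ← op_mul, h.ee i j h1 h2]
  braid i j h1 := by
    simp only [← op_mul, ← mul_assoc]; rw [h.braid i j h1]
  rre i j h1 := by
    simp only [← op_mul, ← mul_assoc]
    have hij : (j : ℕ) + 1 = i ∨ (i : ℕ) + 1 = j := ((adjA n i j).1 h1).symm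
    have := h.sys.ee_right j.2 i.2 hij
    rw [ex_lt r i.2, ex_lt r j.2, ex_lt e i.2, ex_lt e j.2] at this
    rw [this]
  rer i j h1 := by
    simp only [← op_mul, ← mul_assoc]; rw [h.rer i j h1]

theorem swap_conj_apply {X : Type*} [DecidableEq X] (a b c : X)
    (hab : a ≠ b) (hac : a ≠ c) (hbc : b ≠ c) :
    Equiv.swap a b * Equiv.swap b c * Equiv.swap a b =
    Equiv.swap b c * Equiv.swap a b * Equiv.swap b c := by
  ext x
  simp only [Equiv.Perm.mul_apply, Equiv.swap_apply_def]
  grind (splits := 40)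

/-- general three point relations -/
theorem op3 {X : Type*} [DecidableEq X] (a b c : X) (hab : a ≠ b) (hac : a ≠ c) (hbc : b ≠ c) :
    opS R (Equiv.swap a b) * opE δ b c * opS R (Equiv.swap a b) =
    opS R (Equiv.swap b c) * opE δ a b * opS R (Equiv.swap b c) := by
  rw [opS_opE, opS_opE, mul_assoc, mul_assoc, opS_mul, opS_mul, Equiv.swap_mul_self,
    Equiv.swap_mul_self, Equiv.swap_apply_right, Equiv.swap_apply_of_ne_of_ne hac.symm hbc.symm,
    Equiv.swap_apply_left, Equiv.swap_apply_of_ne_of_ne hab hac]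

theorem op_rel : GR n R δ
    (fun i : Fin n => opS R (Equiv.swap (Sum.inl i.castSucc : Pt n) (Sum.inl i.succ)))
    (fun i : Fin n => opE δ (Sum.inl i.castSucc : Pt n) (Sum.inl i.succ)) := by
  have hne : ∀ i : Fin n, (Sum.inl i.castSucc : Pt n) ≠ Sum.inl i.succ := by
    intro i h; simp [Fin.ext_iff] at h
  have far : ∀ i j : Fin n, i ≠ j → ¬ (typeA n).Adj i j →
      (Sum.inl i.castSucc : Pt n) ≠ Sum.inl j.castSucc ∧
      (Sum.inl i.castSucc : Pt n) ≠ Sum.inl j.succ ∧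
      (Sum.inl i.succ : Pt n) ≠ Sum.inl j.castSucc ∧
      (Sum.inl i.succ : Pt n) ≠ Sum.inl j.succ := by
    intro i j h1 h2
    rw [adjA] at h2
    simp only [ne_eq, Sum.inl.injEq, Fin.ext_iff, Fin.val_castSucc, Fin.val_succ] at *
    omega
  have near : ∀ i j : Fin n, (i : ℕ) + 1 = j → i.succ = j.castSucc ∧
      (Sum.inl i.castSucc : Pt n) ≠ Sum.inl j.succ := by
    intro i j h
    simp only [ne_eq, Sum.inl.injEq, Fin.ext_iff, Fin.val_castSucc, Fin.val_succ] at *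
    omega
  have hbr : ∀ i j : Fin n, (i : ℕ) + 1 = j →
      opS R (Equiv.swap (Sum.inl i.castSucc : Pt n) (Sum.inl i.succ)) *
      opS R (Equiv.swap (Sum.inl j.castSucc : Pt n) (Sum.inl j.succ)) *
      opS R (Equiv.swap (Sum.inl i.castSucc : Pt n) (Sum.inl i.succ)) =
      opS R (Equiv.swap (Sum.inl j.castSucc : Pt n) (Sum.inl j.succ)) *
      opS R (Equiv.swap (Sum.inl i.castSucc : Pt n) (Sum.inl i.succ)) *
      opS R (Equiv.swap (Sum.inl j.castSucc : Pt n) (Sum.inl j.succ)) := by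
    intro i j h
    obtain ⟨h1, h2⟩ := near i j h
    simp only [opS_mul]
    have h3 := hne i
    have h4 := hne j
    rw [h1] at h3 ⊢
    rw [swap_conj_apply _ _ _ h3 h2 h4]
  have hrer : ∀ i j : Fin n, (i : ℕ) + 1 = j →
      opS R (Equiv.swap (Sum.inl i.castSucc : Pt n) (Sum.inl i.succ)) *
      opE δ (Sum.inl j.castSucc : Pt n) (Sum.inl j.succ) *
      opS R (Equiv.swap (Sum.inl i.castSucc : Pt n) (Sum.inl i.succ)) =
      opS R (Equiv.swap (Sum.inl j.castSucc : Pt n) (Sum.inl j.succ)) *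
      opE δ (Sum.inl i.castSucc : Pt n) (Sum.inl i.succ) *
      opS R (Equiv.swap (Sum.inl j.castSucc : Pt n) (Sum.inl j.succ)) := by
    intro i j h
    obtain ⟨h1, h2⟩ := near i j h
    have h3 := hne i
    have h4 := hne j
    rw [h1] at h3 ⊢
    exact op3 _ _ _ h3 h2 h4
  constructor
  · intro i; rw [opS_mul, Equiv.swap_mul_self, opS_one]
  · intro i; exact opSE δ _ _ (hne i)
  · intro i; exact opES δ _ _ (hne i)
  · intro i; exact opEE δ _ _ (hne i)
  · intro i j h1 h2
    obtain ⟨a1, a2, a3, a4⟩ := far i j h1 h2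
    simp only [opS_mul]
    congr 1
    apply Equiv.Perm.Disjoint.commute
    intro x
    simp only [Equiv.swap_apply_def]
    grind
  · intro i j h1 h2
    obtain ⟨a1, a2, a3, a4⟩ := far i j h1 h2
    have := opS_opE δ (Equiv.swap (Sum.inl j.castSucc : Pt n) (Sum.inl j.succ))
      (Sum.inl i.castSucc) (Sum.inl i.succ)
    rw [Equiv.swap_apply_of_ne_of_ne a1 a2, Equiv.swap_apply_of_ne_of_ne a3 a4] at this
    exact this.symm
  · intro i j h1 h2
    obtain ⟨a1, a2, a3, a4⟩ := far i j h1 h2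
    exact opEE_comm δ _ _ _ _ (hne i) (hne j) a1 a2 a3 a4
  · intro i j h1
    rw [adjA] at h1
    rcases h1 with h1 | h1
    · exact hbr i j h1
    · exact (hbr j i h1).symm
  · intro i j h1
    rw [adjA] at h1
    rcases h1 with h1 | h1
    · obtain ⟨h5, h2⟩ := near i j h1
      have h3 := hne i
      have h4 := hne j
      simp only [h5] at h3 ⊢
      exact opSSE δ _ _ _ h3 h2 h4
    · obtain ⟨h5, h2⟩ := near j i h1
      have h3 := hne i
      have h4 := hne j
      simp only [h5] at h4 ⊢
      have := opSSE (R := R) δ _ _ _ h3.symm h2.symm h4.symm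
      rw [Equiv.swap_comm (Sum.inl j.castSucc), Equiv.swap_comm _ (Sum.inl i.succ), opE_symm δ _ _ h4,
        opE_symm δ _ _ h3]
      exact this
  · intro i j h1
    rw [adjA] at h1
    rcases h1 with h1 | h1
    · exact hrer i j h1
    · exact (hrer j i h1).symm

theorem main [Nontrivial R] :
    Module.Free R (BrauerAlgebra n (typeA n) R δ) ∧
    Module.rank R (BrauerAlgebra n (typeA n) R δ) =
      (Nat.doubleFactorial (2 * n + 1) : Cardinal) := by
  have hg := gen_rel n R δ
  have hsys := hg.sys
  obtain ⟨T, hT1, hT2⟩ := hg.op.lift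
  have hrev : IsRev n (ex fun i => gen n R δ (.inl i)) (ex fun i => gen n R δ (.inr i)) T := by
    intro i hi
    rw [ex_lt _ hi, ex_lt _ hi]
    constructor
    · simp [tau, hT1]
    · simp [tau, hT2]
  obtain ⟨s, hs, hsp⟩ := hsys.span_card hrev n le_rfl
  have hB : B R (ex fun i => gen n R δ (.inl i)) (ex fun i => gen n R δ (.inr i)) n = ⊤ := by
    rw [eq_top_iff]
    intro x _
    obtain ⟨y, rfl⟩ := RingQuot.mkAlgHom_surjective R (BrauerRel n (typeA n) R δ) x
    induction y using FreeAlgebra.induction with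
    | grade0 c => rw [AlgHom.commutes]; exact algebraMap_mem _ _
    | grade1 x =>
      rcases x with i | i
      · have := r_mem (R := R) (r := ex fun i => gen n R δ (.inl i))
          (e := ex fun i => gen n R δ (.inr i)) i.2
        rwa [ex_lt _ i.2] at this
      · have := e_mem (R := R) (r := ex fun i => gen n R δ (.inl i))
          (e := ex fun i => gen n R δ (.inr i)) i.2
        rwa [ex_lt _ i.2] at this
    | mul a b ha hb => rw [map_mul]; exact mul_mem (ha trivial) (hb trivial)
    | add a b ha hb => rw [map_add]; exact add_mem (ha trivial) (hb trivial)
  have hspan : Submodule.span R (s : Set (BrauerAlgebra n (typeA n) R δ)) = ⊤ := by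
    rw [eq_top_iff]
    intro x _
    exact hsp x (by rw [hB]; trivial)
  obtain ⟨F, hF1, hF2⟩ := (op_rel (n := n) (R := R) (δ := δ)).lift
  let f : BrauerAlgebra n (typeA n) R δ →ₗ[R] (Mt (Pt n) →₀ R) :=
    (LinearMap.applyₗ (Finsupp.single (idm n) 1)) ∘ₗ F.toLinearMap
  have hfx : ∀ x, f x = F x (Finsupp.single (idm n) 1) := fun x => rfl
  have hf : Function.Surjective f := by
    rw [← LinearMap.range_eq_top]
    apply Clo.top (δ := δ)
    · constructor
      · rintro i _ ⟨x, rfl⟩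
        refine ⟨gen n R δ (.inl i) * x, ?_⟩
        rw [hfx, hfx, map_mul, hF1]; rfl
      · rintro i _ ⟨x, rfl⟩
        refine ⟨gen n R δ (.inr i) * x, ?_⟩
        rw [hfx, hfx, map_mul, hF2]; rfl
    · exact ⟨1, by rw [hfx, map_one]; rfl⟩
  have : Finite (Mt (Pt n)) := by unfold Mt; infer_instance
  have hcm := card_mt n
  obtain ⟨h1, h2⟩ := free_of_surj (Mt (Pt n)) s hspan (hs.trans hcm) f hf
  refine ⟨h1, ?_⟩
  rw [h2]
  have h3 : Module.rank R (BrauerAlgebra n (typeA n) R δ) ≤ s.card := by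
    rw [← rank_top, ← hspan]
    exact rank_span_finset_le s
  rw [h2] at h3
  have h4 : Nat.card (Mt (Pt n)) ≤ s.card := by exact_mod_cast h3
  have h5 : Nat.card (Mt (Pt n)) = Nat.doubleFactorial (2 * n + 1) := by omega
  rw [h5]

end concrete

end BrA

/-- For any field `k` and `n ≥ 1`, the Brauer algebra
`Br(A_n, k[δ,δ⁻¹], δ)` over the Laurent polynomial ring `k[δ,δ⁻¹]`, with
parameter the variable `δ`, is a free `k[δ,δ⁻¹]`-module of rank
`(2n+1)!! = 1·3·5⋯(2n+1)`. -/
theorem brauerAlgebra_typeA_laurent_free_rank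
    (k : Type) [Field k] (n : ℕ) (hn : 1 ≤ n) :
    Module.Free (LaurentPolynomial k)
      (BrauerAlgebra n (typeA n) (LaurentPolynomial k) (LaurentPolynomial.T 1)) ∧
    Module.rank (LaurentPolynomial k)
      (BrauerAlgebra n (typeA n) (LaurentPolynomial k) (LaurentPolynomial.T 1)) =
      (Nat.doubleFactorial (2 * n + 1) : Cardinal) := by
  exact BrA.main
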